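/- Let G be a finite simple graph on V = {x_1, ..., x_n} with cover ideal J = J(G) ⊆ S = K[x_1, ..., x_n]. The following are equivalent: (1) G is perfect; (2) for all s with 1 ≤ s < χ(G), a monomial prime P = (x_{i_1}, ..., x_{i_r}) is an associated prime of S/J^s if and only if the induced subgraph of G on {x_{i_1}, ..., x_{i_r}} is a clique of size r with 1 < r ≤ s+1; (3) for all s ≥ 1, J^s has the saturated chain property for associated primes. -/

import Mathlib

open MvPolynomial

/-- A finite simple graph on vertex set `Fin n`, presented as a hypergraph all of whose
edges have cardinality exactly two. -/
structure GraphOn (n : ℕ) where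
  edges : Finset (Finset (Fin n))
  card_eq : ∀ e ∈ edges, e.card = 2

/-- `w` is a vertex cover of `G`: it meets every edge. -/
def IsCover {n : ℕ} (G : GraphOn n) (w : Finset (Fin n)) : Prop :=
  ∀ e ∈ G.edges, (w ∩ e).Nonempty

/-- The cover ideal of `G`. -/
noncomputable def coverIdeal {n : ℕ} (K : Type*) [Field K] (G : GraphOn n) :
    Ideal (MvPolynomial (Fin n) K) :=
  Ideal.span {m | ∃ w : Finset (Fin n), IsCover G w ∧ m = ∏ i ∈ w, X i}

/-- `T` is a clique of `G`: any two distinct vertices of `T` are joined by an edge. -/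
def IsClique {n : ℕ} (G : GraphOn n) (T : Finset (Fin n)) : Prop :=
  ∀ u ∈ T, ∀ v ∈ T, u ≠ v → ({u, v} : Finset (Fin n)) ∈ G.edges

/-- The chromatic number of the induced subgraph of `G` on `W`. -/
noncomputable def chromOn {n : ℕ} (G : GraphOn n) (W : Finset (Fin n)) : ℕ :=
  sInf {k | ∃ c : Fin n → ℕ, (∀ i ∈ W, c i < k) ∧
    ∀ e ∈ G.edges, e ⊆ W → ∃ u ∈ e, ∃ v ∈ e, c u ≠ c v}

/-- The clique number of the induced subgraph of `G` on `W`. -/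
noncomputable def cliqueNumOn {n : ℕ} (G : GraphOn n) (W : Finset (Fin n)) : ℕ :=
  sSup {r | ∃ T : Finset (Fin n), T ⊆ W ∧ IsClique G T ∧ T.card = r}

/-- `G` is perfect: for every induced subgraph the chromatic number equals the clique
number. -/
def IsPerfect {n : ℕ} (G : GraphOn n) : Prop :=
  ∀ W : Finset (Fin n), chromOn G W = cliqueNumOn G W

/-- The monomial prime generated by the variables indexed by `R`. -/
noncomputable def varPrime {n : ℕ} (K : Type*) [Field K] (R : Finset (Fin n)) :
    Ideal (MvPolynomial (Fin n) K) :=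
  Ideal.span {p | ∃ i ∈ R, p = X i}

/-- The height of an ideal `P`: the supremum of the lengths of chains of primes lying
below `P`.  For a prime `P` this is the usual height. -/
noncomputable def primeHeight {R : Type*} [CommRing R] (P : Ideal R) : ℕ∞ :=
  ⨆ (c : LTSeries (PrimeSpectrum R)) (_ : c.last.asIdeal ≤ P), (c.length : ℕ∞)

/-- An ideal `I` has the saturated chain property for associated primes: every
non-minimal associated prime `P` of `S/I` admits an associated prime `Q ⊊ P` with
`height Q = height P − 1`. -/
def SaturatedChainProperty {R : Type*} [CommRing R] (I : Ideal R) : Prop :=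
  ∀ P ∈ associatedPrimes R (R ⧸ I), P ∉ I.minimalPrimes →
    ∃ Q ∈ associatedPrimes R (R ⧸ I), Q < P ∧ primeHeight Q + 1 = primeHeight P

/-- `I` is an independent set of `G`: it contains no edge. -/
def IsIndep {n : ℕ} (G : GraphOn n) (I : Finset (Fin n)) : Prop :=
  ∀ e ∈ G.edges, ¬ e ⊆ I

/-- There are `k` independent sets of `G` such that every vertex `i` lies in at least `b i` of
them, i.e. the blow-up of `G` replacing each `i` by a clique of size `b i` is `k`-colorable. -/
def MultiColorable {n : ℕ} (G : GraphOn n) (b : Fin n → ℕ) (k : ℕ) : Prop :=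
  ∃ L : Multiset (Finset (Fin n)), L.card = k ∧ (∀ I ∈ L, IsIndep G I) ∧
    ∀ i, b i ≤ L.countP (i ∈ ·)

section Combinatorics

variable {n : ℕ} {G : GraphOn n}

lemma IsIndep.card_inter_le_one {I T : Finset (Fin n)} (hI : IsIndep G I) (hT : IsClique G T) :
    (T ∩ I).card ≤ 1 := by
  rw [Finset.card_le_one]
  intro u hu v hv
  by_contra huv
  simp only [Finset.mem_inter] at hu hv
  exact hI _ (hT u hu.1 v hv.1 huv) (by simp [Finset.insert_subset_iff, hu.2, hv.2])

lemma isIndep_singleton (i : Fin n) : IsIndep G {i} := fun e he h => by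
  have := Finset.card_le_card h
  simp [G.card_eq e he] at this

lemma sum_countP_le_card {T : Finset (Fin n)} (hT : IsClique G T)
    {L : Multiset (Finset (Fin n))} (hL : ∀ I ∈ L, IsIndep G I) :
    ∑ i ∈ T, L.countP (i ∈ ·) ≤ L.card := by
  induction L using Multiset.induction_on with
  | empty => simp
  | cons I L ih =>
    simp only [Multiset.countP_cons, Finset.sum_add_distrib, Multiset.card_cons]
    have h1 := ih fun J hJ => hL J (Multiset.mem_cons_of_mem hJ)
    have h2 := (hL I (Multiset.mem_cons_self _ _)).card_inter_le_one hT
    rw [← Finset.filter_mem_eq_inter, Finset.card_filter] at h2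
    omega

lemma MultiColorable.sum_le {b : Fin n → ℕ} {k : ℕ} (h : MultiColorable G b k)
    {T : Finset (Fin n)} (hT : IsClique G T) : ∑ i ∈ T, b i ≤ k := by
  obtain ⟨L, rfl, hL, hb⟩ := h
  exact (Finset.sum_le_sum fun i _ => hb i).trans (sum_countP_le_card hT hL)

lemma MultiColorable.mono {b b' : Fin n → ℕ} {k k' : ℕ} (h : MultiColorable G b k)
    (hb : b' ≤ b) (hk : k ≤ k') : MultiColorable G b' k' := by
  obtain ⟨L, rfl, hL, hLb⟩ := h
  refine ⟨L + Multiset.replicate (k' - L.card) ∅, by simp; omega, ?_, fun i => ?_⟩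
  · intro I hI
    rcases Multiset.mem_add.1 hI with hI | hI
    · exact hL I hI
    · rw [Multiset.eq_of_mem_replicate hI]
      intro e he h
      simpa [Finset.subset_empty.1 h] using G.card_eq e he
  · rw [Multiset.countP_add]
    exact (hb i).trans ((hLb i).trans (Nat.le_add_right _ _))

lemma multiColorable_sum (b : Fin n → ℕ) : MultiColorable G b (∑ i, b i) := by
  refine ⟨∑ i, Multiset.replicate (b i) {i}, by simp, ?_, fun i => ?_⟩
  · intro I hI
    obtain ⟨i, -, hi⟩ := Multiset.mem_sum.1 hI
    rw [Multiset.eq_of_mem_replicate hi]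
    exact isIndep_singleton i
  · have h : Multiset.replicate (b i) {i} ≤ ∑ j, Multiset.replicate (b j) ({j} : Finset (Fin n)) :=
      Finset.single_le_sum (f := fun j => Multiset.replicate (b j) ({j} : Finset (Fin n)))
        (fun j _ => Multiset.zero_le _) (Finset.mem_univ i)
    refine le_trans (Eq.ge ?_) (Multiset.countP_le_of_le _ h)
    rw [Multiset.countP_eq_card.2]
    · simp
    · intro J hJ
      simp [Multiset.eq_of_mem_replicate hJ]

lemma MultiColorable.cons {b b' : Fin n → ℕ} {k : ℕ} {I : Finset (Fin n)}
    (h : MultiColorable G b k) (hI : IsIndep G I) (hb : ∀ i, b' i ≤ b i + if i ∈ I then 1 else 0) :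
    MultiColorable G b' (k + 1) := by
  obtain ⟨L, rfl, hL, hLb⟩ := h
  refine ⟨I ::ₘ L, by simp, by simpa using ⟨hI, hL⟩, fun i => ?_⟩
  rw [Multiset.countP_cons]
  exact (hb i).trans (Nat.add_le_add_right (hLb i) _)

/-- The indicator function of `W`, as a vertex weight. -/
def indicatorWeight (W : Finset (Fin n)) (i : Fin n) : ℕ := if i ∈ W then 1 else 0

lemma chromOn_spec (G : GraphOn n) (W : Finset (Fin n)) :
    ∃ c : Fin n → ℕ, (∀ i ∈ W, c i < chromOn G W) ∧
      ∀ e ∈ G.edges, e ⊆ W → ∃ u ∈ e, ∃ v ∈ e, c u ≠ c v := by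
  refine Nat.sInf_mem (s := {k | ∃ c : Fin n → ℕ, (∀ i ∈ W, c i < k) ∧
    ∀ e ∈ G.edges, e ⊆ W → ∃ u ∈ e, ∃ v ∈ e, c u ≠ c v})
    ⟨n, fun i => i, fun i _ => i.2, fun e he _ => ?_⟩
  obtain ⟨u, v, huv, rfl⟩ := Finset.card_eq_two.1 (G.card_eq e he)
  exact ⟨u, by simp, v, by simp, fun h => huv (Fin.ext h)⟩

lemma chromOn_le_iff {W : Finset (Fin n)} {k : ℕ} :
    chromOn G W ≤ k ↔ MultiColorable G (indicatorWeight W) k := by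
  constructor
  · intro h
    obtain ⟨c, hc, hce⟩ := chromOn_spec G W
    refine MultiColorable.mono (k := chromOn G W)
      ⟨(Multiset.range (chromOn G W)).map fun j => W.filter fun i => c i = j, by simp, ?_, ?_⟩
      le_rfl h
    · intro I hI e he heI
      obtain ⟨j, -, rfl⟩ := Multiset.mem_map.1 hI
      obtain ⟨u, hu, v, hv, huv⟩ := hce e he fun i hi => (Finset.mem_filter.1 (heI hi)).1
      exact huv ((Finset.mem_filter.1 (heI hu)).2.trans (Finset.mem_filter.1 (heI hv)).2.symm)
    · intro i
      unfold indicatorWeight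
      split_ifs with hi
      · refine Multiset.countP_pos.2 ⟨_, Multiset.mem_map.2 ⟨c i, ?_, rfl⟩, by simp [hi]⟩
        simpa using hc i hi
      · exact Nat.zero_le _
  · rintro ⟨L, rfl, hL, hLW⟩
    have hex : ∀ i ∈ W, ∃ I ∈ L.toList, decide (i ∈ I) = true := fun i hi => by
      have h : 0 < L.countP (i ∈ ·) :=
        lt_of_lt_of_le (by simp [indicatorWeight, hi]) (hLW i)
      simpa using Multiset.countP_pos.1 h
    have hlt : ∀ i ∈ W, L.toList.findIdx (fun I => decide (i ∈ I)) < L.toList.length :=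
      fun i hi => List.findIdx_lt_length_of_exists (hex i hi)
    refine Nat.sInf_le ⟨fun i => L.toList.findIdx fun I => decide (i ∈ I), fun i hi => ?_,
      fun e he heW => ?_⟩
    · simpa using hlt i hi
    · by_contra! hcon
      obtain ⟨u, hu⟩ := Finset.card_pos.1 (by rw [G.card_eq e he]; norm_num)
      refine hL _ (Multiset.mem_toList.1 (List.getElem_mem (hlt u (heW hu)))) e he fun v hv => ?_
      have h := List.findIdx_getElem (w := hlt v (heW hv))
      simp only [hcon u hu v hv]
      simpa using h

lemma card_le_cliqueNumOn {W T : Finset (Fin n)} (hTW : T ⊆ W) (hT : IsClique G T) :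
    T.card ≤ cliqueNumOn G W :=
  le_csSup ⟨W.card, by rintro _ ⟨T, h, -, rfl⟩; exact Finset.card_le_card h⟩ ⟨T, hTW, hT, rfl⟩

lemma cliqueNumOn_le {W : Finset (Fin n)} {k : ℕ}
    (h : ∀ T ⊆ W, IsClique G T → T.card ≤ k) : cliqueNumOn G W ≤ k :=
  csSup_le ⟨0, ∅, by simp [IsClique]⟩ (by rintro _ ⟨T, h1, h2, rfl⟩; exact h T h1 h2)

lemma sum_indicatorWeight {W T : Finset (Fin n)} (h : T ⊆ W) :
    ∑ i ∈ T, indicatorWeight W i = T.card := by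
  rw [Finset.card_eq_sum_ones]
  exact Finset.sum_congr rfl fun i hi => by simp [indicatorWeight, h hi]

lemma cliqueNumOn_le_chromOn (W : Finset (Fin n)) : cliqueNumOn G W ≤ chromOn G W :=
  cliqueNumOn_le fun _ hTW hT =>
    sum_indicatorWeight hTW ▸ (chromOn_le_iff.1 (le_refl (chromOn G W))).sum_le hT

lemma chromOn_mono {W W' : Finset (Fin n)} (h : W ⊆ W') : chromOn G W ≤ chromOn G W' := by
  refine chromOn_le_iff.2 ((chromOn_le_iff.1 (le_refl (chromOn G W'))).mono (fun i => ?_) le_rfl)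
  simp only [indicatorWeight]
  split_ifs with h1 h2
  exacts [le_rfl, absurd (h h1) h2, Nat.zero_le _, le_rfl]

/-- A weighted form of Lovász's replication lemma: if all induced subgraphs of `G` on subsets of
`R` have equal chromatic and clique numbers, then the weighted chromatic number of a weight
supported on `R` is the maximal weight of a clique. -/
theorem multiColorable_of_forall_clique_sum_le {R : Finset (Fin n)}
    (hR : ∀ W ⊆ R, chromOn G W = cliqueNumOn G W) (b : Fin n → ℕ) (k : ℕ)
    (hb : ∀ i, b i ≠ 0 → i ∈ R) (hk : ∀ T, IsClique G T → ∑ i ∈ T, b i ≤ k) :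
    MultiColorable G b k := by
  induction hN : ∑ i, b i using Nat.strong_induction_on generalizing b k with
  | _ N ih =>
  subst hN
  by_cases h2 : ∃ v, 2 ≤ b v
  · obtain ⟨v, hv⟩ := h2
    obtain ⟨L, rfl, hL, hLb⟩ := ih _ (Finset.sum_lt_sum (fun i _ => Nat.sub_le _ _)
      ⟨v, Finset.mem_univ _, by simp; omega⟩) (fun i => b i - if i = v then 1 else 0) k
      (fun i hi => hb i (by omega))
      (fun T hT => (Finset.sum_le_sum fun i _ => Nat.sub_le _ _).trans (hk T hT)) rfl
    obtain ⟨S, hSL, hvS⟩ : ∃ S ∈ L, v ∈ S := by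
      refine Multiset.countP_pos.1 (lt_of_lt_of_le ?_ (hLb v))
      simp; omega
    obtain ⟨L', rfl⟩ := Multiset.exists_cons_of_mem hSL
    have hS : IsIndep G S := hL S (Multiset.mem_cons_self _ _)
    have hL' : ∀ I ∈ L', IsIndep G I := fun I hI => hL I (Multiset.mem_cons_of_mem hI)
    rw [Multiset.card_cons] at hk ⊢
    refine MultiColorable.cons (b := fun i => b i - if i ∈ S then 1 else 0) (ih _
      (Finset.sum_lt_sum (fun i _ => Nat.sub_le _ _) ⟨v, Finset.mem_univ _, by simp [hvS]; omega⟩)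
      _ _ (fun i hi => hb i (by omega)) (fun T hT => ?_) rfl) hS (fun i => by omega)
    by_cases hu : ∃ u ∈ T, u ∈ S ∧ 1 ≤ b u
    · obtain ⟨u, huT, huS, hu⟩ := hu
      refine Nat.le_of_lt_succ ((Finset.sum_lt_sum (fun i _ => Nat.sub_le _ _)
        ⟨u, huT, ?_⟩).trans_le (hk T hT))
      simp [huS]; omega
    · push Not at hu
      refine (Finset.sum_le_sum fun i hi => ?_).trans (sum_countP_le_card hT hL')
      have hi1 := hLb i
      rw [Multiset.countP_cons] at hi1
      have hi2 := hu i hi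
      by_cases hiS : i ∈ S
      · have := hi2 hiS
        simp [hiS]; omega
      · have : i ≠ v := fun h => hiS (h ▸ hvS)
        simpa [hiS, this] using hi1
  · push Not at h2
    have hbW : b = indicatorWeight (Finset.univ.filter fun i => b i ≠ 0) := by
      ext i
      have := h2 i
      by_cases hi : b i = 0
      · simp [indicatorWeight, hi]
      · simp [indicatorWeight, hi]; omega
    have hWR : (Finset.univ.filter fun i => b i ≠ 0) ⊆ R := fun i hi => hb i (by simpa using hi)
    generalize Finset.univ.filter (fun i => b i ≠ 0) = W at hbW hWR
    subst hbW
    refine chromOn_le_iff.1 ((hR W hWR).trans_le (cliqueNumOn_le fun T hTW hT => ?_))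
    rw [← sum_indicatorWeight hTW]
    exact hk T hT

lemma chromOn_le_card (W : Finset (Fin n)) : chromOn G W ≤ W.card := by
  refine chromOn_le_iff.2 ((multiColorable_sum _).mono le_rfl (le_of_eq ?_))
  simp [indicatorWeight]

lemma chromOn_lt_card {W : Finset (Fin n)} (hW : ¬ IsClique G W) : chromOn G W < W.card := by
  simp only [IsClique, not_forall] at hW
  obtain ⟨u, hu, v, hv, huv, he⟩ := hW
  have hind : IsIndep G {u, v} := fun e heG hsub => he <| by
    rwa [← Finset.eq_of_subset_of_card_le hsub (by rw [G.card_eq e heG, Finset.card_pair huv])]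
  have hcard : (W \ {u, v}).card + 2 = W.card := by
    rw [← Finset.card_pair huv]
    exact Finset.card_sdiff_add_card_eq_card (by simp [Finset.insert_subset_iff, hu, hv])
  have hcol : MultiColorable G (indicatorWeight (W \ {u, v})) (W \ {u, v}).card :=
    chromOn_le_iff.1 (chromOn_le_card _)
  have := chromOn_le_iff.2 (hcol.cons (b' := indicatorWeight W) hind fun i => by
    by_cases h1 : i ∈ W <;> by_cases h2 : i = u ∨ i = v <;> simp [indicatorWeight, h1, h2])
  omega

/-- `b` is a weight with values in `[0, s]` supported on `R` whose weighted chromatic number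
exceeds `s`, but drops to at most `s` when the weight of any vertex of `R` is decreased by one. -/
def IsCriticalWeight (G : GraphOn n) (s : ℕ) (R : Finset (Fin n)) (b : Fin n → ℕ) : Prop :=
  (∀ i, b i ≤ s) ∧ (∀ i, b i ≠ 0 → i ∈ R) ∧ ¬ MultiColorable G b s ∧
    ∀ i ∈ R, MultiColorable G (fun j => b j - if j = i then 1 else 0) s

lemma IsClique.exists_isCriticalWeight {R : Finset (Fin n)} {s : ℕ} (hR : IsClique G R)
    (h1 : 1 < R.card) (hs : R.card ≤ s + 1) : ∃ b, IsCriticalWeight G s R b := by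
  obtain ⟨v, hv⟩ := Finset.card_pos.1 (zero_lt_one.trans h1)
  set b : Fin n → ℕ := fun i => indicatorWeight R i + if i = v then s + 1 - R.card else 0 with hb
  have hsum : ∑ i, b i = s + 1 := by
    simp only [hb, Finset.sum_add_distrib, Finset.sum_ite_eq', Finset.mem_univ, if_true,
      indicatorWeight]
    simp; omega
  have hsupp : ∀ i, b i ≠ 0 → i ∈ R := by
    intro i hi
    by_contra hiR
    have : i ≠ v := fun h => hiR (h ▸ hv)
    simp [hb, indicatorWeight, hiR, this] at hi
  refine ⟨b, fun i => ?_, hsupp, fun h => ?_, fun i hi => ?_⟩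
  · simp only [hb, indicatorWeight]
    split_ifs <;> omega
  · have := h.sum_le hR
    rw [Finset.sum_subset (Finset.subset_univ R) fun i _ hi => by_contra fun h => hi (hsupp i h),
      hsum] at this
    omega
  · refine (multiColorable_sum _).mono le_rfl (Nat.le_of_lt_succ ?_)
    rw [Nat.succ_eq_add_one, ← hsum]
    refine Finset.sum_lt_sum (fun j _ => Nat.sub_le _ _) ⟨i, Finset.mem_univ _, ?_⟩
    have : 0 < b i := by simp [hb, indicatorWeight, hi]
    simp; omega

theorem exists_isCriticalWeight_iff {R : Finset (Fin n)}
    (hR : ∀ W ⊆ R, chromOn G W = cliqueNumOn G W) {s : ℕ} :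
    (∃ b, IsCriticalWeight G s R b) ↔ 1 < R.card ∧ R.card ≤ s + 1 ∧ IsClique G R := by
  refine ⟨?_, fun h => h.2.2.exists_isCriticalWeight h.1 h.2.1⟩
  rintro ⟨b, hbs, hbR, hnot, hcrit⟩
  obtain ⟨T, hT, hTs⟩ : ∃ T, IsClique G T ∧ s < ∑ i ∈ T, b i := by
    by_contra! h
    exact hnot (multiColorable_of_forall_clique_sum_le hR b s hbR h)
  have hpos : ∀ i ∈ R, i ∈ T ∧ b i ≠ 0 := by
    intro i hi
    by_contra hcon
    refine (((hcrit i hi).sum_le hT).trans_lt hTs).ne (Finset.sum_congr rfl fun j hj => ?_)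
    by_cases hji : j = i
    · subst hji
      have : b j = 0 := by simpa [hj] using hcon
      simp [this]
    · simp [hji]
  have hRclique : IsClique G R := fun u hu v hv => hT u (hpos u hu).1 v (hpos v hv).1
  have hTR : ∑ i ∈ T, b i = ∑ i ∈ R, b i :=
    (Finset.sum_subset (fun i hi => (hpos i hi).1)
      fun i _ hi => by_contra fun h => hi (hbR i h)).symm
  rw [hTR] at hTs
  obtain ⟨v, hv⟩ : R.Nonempty := by
    rw [Finset.nonempty_iff_ne_empty]
    rintro rfl
    simp at hTs
  refine ⟨?_, ?_, hRclique⟩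
  · by_contra hcard
    have : R = {v} := Finset.eq_singleton_iff_unique_mem.2
      ⟨hv, fun w hw => Finset.card_le_one.1 (not_lt.1 hcard) w hw v hv⟩
    subst this
    have := hbs v
    simp at hTs
    omega
  · have h1 := (hcrit v hv).sum_le hRclique
    have h2 : ∑ i ∈ R, 1 ≤ ∑ i ∈ R, ((b i - if i = v then 1 else 0) + if i = v then 1 else 0) :=
      Finset.sum_le_sum fun i hi => by
        have := (hpos i hi).2
        omega
    rw [Finset.sum_add_distrib, Finset.sum_ite_eq', if_pos hv, ← Finset.card_eq_sum_ones] at h2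
    omega

/-- A minimal set violating perfection has critically `(s + 1)`-chromatic induced subgraph. -/
lemma exists_isCriticalWeight_of_not_isPerfect (h : ¬ IsPerfect G) :
    ∃ W s, chromOn G W = s + 1 ∧ 1 ≤ s ∧ cliqueNumOn G W ≤ s ∧ ¬ IsClique G W ∧
      (∀ W' ⊂ W, chromOn G W' = cliqueNumOn G W') ∧ ∃ b, IsCriticalWeight G s W b := by
  obtain ⟨W₀, hW₀⟩ := not_forall.1 h
  obtain ⟨W, -, hW⟩ := exists_minimal_le_of_wellFoundedLT
    (fun W => chromOn G W ≠ cliqueNumOn G W) W₀ hW₀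
  have hmin : ∀ W' ⊂ W, chromOn G W' = cliqueNumOn G W' := fun W' hW' =>
    by_contra fun h => hW.not_prop_of_lt hW' h
  have hlt : cliqueNumOn G W < chromOn G W := lt_of_le_of_ne (cliqueNumOn_le_chromOn W) hW.1.symm
  have hclique : ¬ IsClique G W := fun h =>
    (hlt.trans_le (chromOn_le_card W)).not_ge (card_le_cliqueNumOn subset_rfl h)
  obtain ⟨s, hs⟩ : ∃ s, chromOn G W = s + 1 := ⟨chromOn G W - 1, by omega⟩
  have hs1 : 1 ≤ s := by
    obtain ⟨v, hv⟩ : W.Nonempty := by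
      rw [Finset.nonempty_iff_ne_empty]
      rintro rfl
      exact hclique (by simp [IsClique])
    have := card_le_cliqueNumOn (G := G) (Finset.singleton_subset_iff.2 hv)
      (fun a ha b hb hab => absurd (by simp_all) hab)
    simp at this
    omega
  refine ⟨W, s, hs, hs1, by omega, hclique, hmin, indicatorWeight W, fun i => ?_, fun i hi => ?_,
    fun hcol => ?_, fun i hi => ?_⟩
  · unfold indicatorWeight
    split_ifs <;> omega
  · by_contra hiW
    simp [indicatorWeight, hiW] at hi
  · have := chromOn_le_iff.2 hcol
    omega
  · have h1 : chromOn G (W.erase i) ≤ s := by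
      rw [hmin _ (Finset.erase_ssubset hi)]
      refine (cliqueNumOn_le fun _ hT hTc => ?_).trans (Nat.le_of_lt_succ (hs ▸ hlt))
      exact card_le_cliqueNumOn (hT.trans (Finset.erase_subset _ _)) hTc
    refine (chromOn_le_iff.1 h1).mono (fun j => ?_) le_rfl
    by_cases hji : j = i <;> simp [indicatorWeight, hji, hi]

end Combinatorics

section MonomialIdeals

variable {σ K : Type*} [Field K]

/-- An associated prime of a monomial ideal is the colon ideal of a monomial. -/
lemma exists_monomial_of_eq_colon {I P : Ideal (MvPolynomial σ K)} [hP : P.IsPrime]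
    (hI : ∀ f, f ∈ I ↔ ∀ m ∈ f.support, monomial m (1 : K) ∈ I)
    (h : ∃ f, ∀ g, g ∈ P ↔ g * f ∈ I) :
    ∃ a, ∀ g, g ∈ P ↔ g * monomial a 1 ∈ I := by
  classical
  obtain ⟨f, hf, hmin⟩ := WellFounded.has_min
    (InvImage.wf (fun f : MvPolynomial σ K => f.support.card) wellFounded_lt) _ h
  have hmon : ∀ m ∈ f.support, ∀ β,
      monomial β (1 : K) ∈ P ↔ monomial (β + m) (1 : K) ∈ I := by
    intro m hm β
    constructor
    · intro hβ
      refine (hI _).1 ((hf _).1 hβ) _ ?_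
      rw [mem_support_iff, coeff_monomial_mul, one_mul]
      exact mem_support_iff.1 hm
    · intro hβ
      by_contra hβP
      refine hmin (monomial β 1 * (f - monomial m (f.coeff m))) (fun g => ?_) ?_
      · have h1 : g * (monomial β 1 * (f - monomial m (f.coeff m))) =
            g * monomial β 1 * f - g * C (f.coeff m) * monomial (β + m) 1 := by
          have : monomial (β + m) (1 : K) * C (f.coeff m) =
              monomial β 1 * monomial m (f.coeff m) := by
            rw [mul_comm, C_mul_monomial, monomial_mul, mul_one, one_mul]
          linear_combination g * this
        rw [h1, sub_eq_add_neg, I.add_mem_iff_left (I.neg_mem (I.mul_mem_left _ hβ)), ← hf,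
          hP.mul_mem_iff_mem_or_mem, or_iff_left hβP]
      · change Finset.card _ < Finset.card _
        have h1 : (f - monomial m (f.coeff m)).support ⊆ f.support.erase m := by
          intro x hx
          rw [mem_support_iff, coeff_sub, coeff_monomial] at hx
          rw [Finset.mem_erase, mem_support_iff]
          by_cases hmx : m = x
          · subst hmx
            simp at hx
          · exact ⟨fun h => hmx h.symm, by simpa [hmx] using hx⟩
        have h2 := (Finset.card_le_card (support_mul (monomial β (1 : K))
          (f - monomial m (f.coeff m)))).trans Finset.card_add_le
        have h3 : (monomial β (1 : K)).support.card ≤ 1 := by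
          simpa using Finset.card_le_card (support_monomial_subset (s := β) (a := (1 : K)))
        have h4 := Finset.card_erase_lt_of_mem hm
        have h5 := Finset.card_le_card h1
        have h6 := Nat.mul_le_mul_right (f - monomial m (f.coeff m)).support.card h3
        omega
  have hf0 : f ≠ 0 := by
    rintro rfl
    exact hP.ne_top ((Ideal.eq_top_iff_one _).2 ((hf 1).2 (by simp)))
  have hPmon : ∀ g, g ∈ P ↔ ∀ β ∈ g.support, monomial β (1 : K) ∈ P := by
    intro g
    have hsum : ∀ s : Finset (σ →₀ ℕ), (∀ β ∈ s, monomial β (1 : K) ∈ P) →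
        ∑ β ∈ s, monomial β (g.coeff β) ∈ P := fun s hs => P.sum_mem fun β hβ => by
      rw [← mul_one (coeff β g), ← C_mul_monomial]
      exact P.mul_mem_left _ (hs β hβ)
    constructor
    · intro hg
      by_contra! hcon
      obtain ⟨β₀, hβ₀, hβ₀P⟩ := hcon
      set g₂ := ∑ β ∈ g.support with monomial β (1 : K) ∉ P, monomial β (g.coeff β) with hg₂
      have hcoeff : ∀ β, g₂.coeff β ≠ 0 → monomial β (1 : K) ∉ P := by
        intro β hβ
        rw [hg₂, coeff_sum] at hβ
        obtain ⟨γ, hγ, hγβ⟩ := Finset.exists_ne_zero_of_sum_ne_zero hβ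
        rw [coeff_monomial] at hγβ
        split_ifs at hγβ with h
        · exact h ▸ (Finset.mem_filter.1 hγ).2
        · exact absurd rfl hγβ
      have hg₂P : g₂ ∈ P := by
        have h1 := Finset.sum_filter_add_sum_filter_not g.support
          (fun β => monomial β (1 : K) ∈ P) fun β => monomial β (g.coeff β)
        rw [← as_sum] at h1
        rw [← h1] at hg
        exact (P.add_mem_iff_right (hsum _ fun β hβ => (Finset.mem_filter.1 hβ).2)).1 hg
      have hg₂0 : g₂ ≠ 0 := by
        intro h0
        have h1 : g₂.coeff β₀ = g.coeff β₀ := by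
          simp [hg₂, coeff_sum, coeff_monomial, hβ₀P, eq_comm]
        rw [h0, coeff_zero] at h1
        exact mem_support_iff.1 hβ₀ h1.symm
      refine mul_ne_zero hg₂0 hf0 (support_eq_empty.1 (Finset.eq_empty_of_forall_notMem ?_))
      intro γ hγ
      have h1 := (hI _).1 ((hf _).1 hg₂P) γ hγ
      obtain ⟨β, hβ, m, hm, rfl⟩ := Finset.mem_add.1 (support_mul _ _ hγ)
      exact hcoeff β (mem_support_iff.1 hβ) ((hmon m hm β).2 h1)
    · intro hg
      rw [as_sum g]
      exact hsum _ hg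
  obtain ⟨m, hm⟩ := support_nonempty.2 hf0
  refine ⟨m, fun g => ?_⟩
  rw [hPmon, hI]
  constructor
  · intro h γ hγ
    obtain ⟨β, hβ, m', hm', rfl⟩ := Finset.mem_add.1 (support_mul _ _ hγ)
    rw [Finset.mem_singleton.1 (support_monomial_subset hm')]
    exact (hmon m hm β).1 (h β hβ)
  · intro h β hβ
    refine (hmon m hm β).2 (h _ ?_)
    rw [mem_support_iff, coeff_mul_monomial, mul_one]
    exact mem_support_iff.1 hβ

end MonomialIdeals

section VarPrime

variable {n : ℕ} {K : Type*} [Field K]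

lemma mem_varPrime_iff {R : Finset (Fin n)} {f : MvPolynomial (Fin n) K} :
    f ∈ varPrime K R ↔ ∀ m ∈ f.support, ∃ i ∈ R, m i ≠ 0 := by
  have : varPrime K R = Ideal.span (X '' (R : Set (Fin n))) := by
    simp only [varPrime, Set.image, Finset.mem_coe, eq_comm]
  rw [this, mem_ideal_span_X_image]
  rfl

lemma monomial_mem_varPrime_iff {R : Finset (Fin n)} {m : Fin n →₀ ℕ} :
    monomial m (1 : K) ∈ varPrime K R ↔ ∃ i ∈ R, m i ≠ 0 := by
  simp [mem_varPrime_iff]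

lemma X_mem_varPrime_iff {R : Finset (Fin n)} {i : Fin n} :
    (X i : MvPolynomial (Fin n) K) ∈ varPrime K R ↔ i ∈ R := by
  simp [X, monomial_mem_varPrime_iff, Finsupp.single_apply]

lemma varPrime_le_iff {R : Finset (Fin n)} {I : Ideal (MvPolynomial (Fin n) K)} :
    varPrime K R ≤ I ↔ ∀ i ∈ R, X i ∈ I := by
  rw [varPrime, Ideal.span_le]
  exact ⟨fun h i hi => h ⟨i, hi, rfl⟩, by rintro h _ ⟨i, hi, rfl⟩; exact h i hi⟩

lemma varPrime_le_varPrime_iff {R R' : Finset (Fin n)} :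
    varPrime K R ≤ varPrime K R' ↔ R ⊆ R' := by
  simp only [varPrime_le_iff, X_mem_varPrime_iff, Finset.subset_iff]

lemma varPrime_lt_varPrime_iff {R R' : Finset (Fin n)} :
    varPrime K R < varPrime K R' ↔ R ⊂ R' := by
  rw [lt_iff_le_not_ge, varPrime_le_varPrime_iff, varPrime_le_varPrime_iff]
  rfl

instance isPrime_varPrime (R : Finset (Fin n)) : (varPrime K R).IsPrime := by
  let φ : MvPolynomial (Fin n) K →ₐ[K] MvPolynomial (Fin n) K :=
    aeval fun i => if i ∈ R then 0 else X i
  have hφ : (Ideal.Quotient.mkₐ K (varPrime K R)).comp φ = Ideal.Quotient.mkₐ K _ := by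
    ext i
    by_cases hi : i ∈ R
    · simpa [φ, hi, eq_comm] using Ideal.Quotient.eq_zero_iff_mem.2 (X_mem_varPrime_iff.2 hi)
    · simp [φ, hi]
  have : varPrime K R = RingHom.ker φ := by
    refine le_antisymm (varPrime_le_iff.2 fun i hi => by simp [φ, hi]) fun f hf => ?_
    rw [← Ideal.Quotient.eq_zero_iff_mem]
    have := DFunLike.congr_fun hφ f
    simp only [AlgHom.comp_apply, (RingHom.mem_ker).1 hf, map_zero] at this
    exact this.symm
  rw [this]
  exact RingHom.ker_isPrime _

lemma primeHeight_eq_height {A : Type*} [CommRing A] (P : Ideal A) [hP : P.IsPrime] :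
    primeHeight P = P.height :=
  (PrimeSpectrum.height_eq_orderHeight ⟨P, hP⟩).symm

lemma card_le_height_varPrime (R : Finset (Fin n)) : (R.card : ℕ∞) ≤ (varPrime K R).height := by
  induction R using Finset.induction_on with
  | empty => simp
  | insert i R hi ih =>
    rw [Finset.card_insert_of_notMem hi, Nat.cast_add, Nat.cast_one]
    exact (add_le_add_left ih 1).trans (Ideal.height_add_one_le_of_lt_of_isPrime
      (varPrime_lt_varPrime_iff.2 (Finset.ssubset_insert hi)))

lemma primeHeight_varPrime (R : Finset (Fin n)) : primeHeight (varPrime K R) = R.card := by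
  classical
  rw [primeHeight_eq_height]
  refine le_antisymm ?_ (card_le_height_varPrime R)
  have hspan : varPrime K R = Ideal.span ((R.image X : Finset (MvPolynomial (Fin n) K)) : Set _) := by
    simp [varPrime, Set.image, eq_comm]
  refine (Ideal.height_le_card_of_mem_minimalPrimes_span_finset (s := R.image X) ?_).trans
    (Nat.cast_le.2 Finset.card_image_le)
  rw [← hspan, Ideal.minimalPrimes_eq_subsingleton_self]
  rfl

end VarPrime

section CoverIdeal

variable {n : ℕ} {K : Type*} [Field K] {G : GraphOn n}

/-- The exponents of the products of `s` squarefree monomials of vertex covers of `G`. -/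
def coverExponents (G : GraphOn n) (s : ℕ) : Set (Fin n →₀ ℕ) :=
  {e | ∃ L : Multiset (Finset (Fin n)), L.card = s ∧ (∀ I ∈ L, IsIndep G I) ∧
    ∀ i, e i + L.countP (i ∈ ·) = s}

lemma isCover_compl_iff {I : Finset (Fin n)} : IsCover G Iᶜ ↔ IsIndep G I := by
  refine forall₂_congr fun e _ => ?_
  rw [Finset.not_subset]
  simp [Finset.Nonempty, and_comm]

lemma coverIdeal_pow_eq_span (s : ℕ) :
    coverIdeal K G ^ s = Ideal.span ((fun e => monomial e (1 : K)) '' coverExponents G s) := by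
  induction s with
  | zero =>
    symm
    rw [pow_zero, Ideal.one_eq_top, Ideal.eq_top_iff_one]
    exact Ideal.subset_span ⟨0, ⟨0, by simp⟩, rfl⟩
  | succ s ih =>
    rw [pow_succ, ih, coverIdeal, Ideal.span_mul_span']
    congr 1
    ext f
    simp only [Set.mem_mul, Set.mem_image, Set.mem_ofPred_eq]
    have hprod : ∀ w : Finset (Fin n), ∏ i ∈ w, (X i : MvPolynomial (Fin n) K) =
        monomial (∑ i ∈ w, Finsupp.single i 1) 1 := fun w => by
      rw [monomial_sum_one]; rfl
    have hexp : ∀ (w : Finset (Fin n)) j,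
        (∑ i ∈ w, Finsupp.single i 1 : Fin n →₀ ℕ) j = if j ∈ w then 1 else 0 := fun w j => by
      simp [Finsupp.finsetSum_apply, Finsupp.single_apply]
    constructor
    · rintro ⟨_, ⟨e, ⟨L, rfl, hL, he⟩, rfl⟩, _, ⟨w, hw, rfl⟩, rfl⟩
      refine ⟨e + ∑ i ∈ w, Finsupp.single i 1, ⟨wᶜ ::ₘ L, by simp, ?_, fun j => ?_⟩, ?_⟩
      · simp only [Multiset.mem_cons, forall_eq_or_imp]
        exact ⟨isCover_compl_iff.1 (by rwa [compl_compl]), hL⟩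
      · rw [Multiset.countP_cons, Finsupp.add_apply, hexp]
        have := he j
        by_cases hj : j ∈ w <;> simp [hj] <;> omega
      · simp [hprod, monomial_mul]
    · rintro ⟨e, ⟨L, hcard, hL, he⟩, rfl⟩
      obtain ⟨I, hI⟩ := Multiset.card_pos_iff_exists_mem.1
        (hcard.symm ▸ Nat.succ_pos s : 0 < L.card)
      obtain ⟨L, rfl⟩ := Multiset.exists_cons_of_mem hI
      have hle : (∑ i ∈ Iᶜ, Finsupp.single i 1 : Fin n →₀ ℕ) ≤ e := fun j => by
        have h1 := he j
        have h2 := Multiset.countP_le_card (j ∈ ·) L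
        rw [Multiset.countP_cons] at h1
        rw [Multiset.card_cons] at hcard
        rw [hexp]
        by_cases hj : j ∈ I <;> simp [hj] at h1 ⊢
        omega
      refine ⟨_, ⟨e - ∑ i ∈ Iᶜ, Finsupp.single i 1, ⟨L, by simpa using hcard,
        fun J hJ => hL J (Multiset.mem_cons_of_mem hJ), fun j => ?_⟩, rfl⟩, _,
        ⟨Iᶜ, isCover_compl_iff.2 (hL I hI), rfl⟩, ?_⟩
      · have h1 := he j
        have h2 := hle j
        rw [Multiset.countP_cons] at h1
        rw [hexp] at h2
        rw [Finsupp.tsub_apply, hexp]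
        by_cases hj : j ∈ I <;> simp [hj] at h1 h2 ⊢ <;> omega
      · rw [hprod, monomial_mul, tsub_add_cancel_of_le hle, one_mul]

lemma mem_coverIdeal_pow_iff {s : ℕ} {f : MvPolynomial (Fin n) K} :
    f ∈ coverIdeal K G ^ s ↔ ∀ m ∈ f.support, MultiColorable G (fun i => s - m i) s := by
  rw [coverIdeal_pow_eq_span, mem_ideal_span_monomial_image]
  refine forall₂_congr fun m _ => ⟨?_, ?_⟩
  · rintro ⟨e, ⟨L, hcard, hL, he⟩, hem⟩
    refine ⟨L, hcard, hL, fun i => ?_⟩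
    have h1 := he i
    have h2 := hem i
    dsimp only
    omega
  · rintro ⟨L, hcard, hL, hm⟩
    refine ⟨Finsupp.equivFunOnFinite.symm fun i => s - L.countP (i ∈ ·),
      ⟨L, hcard, hL, fun i => ?_⟩, fun i => ?_⟩
    · have := Multiset.countP_le_card (i ∈ ·) L
      simp
      omega
    · have : s - m i ≤ _ := hm i
      simp
      omega

lemma monomial_mem_coverIdeal_pow_iff {s : ℕ} {m : Fin n →₀ ℕ} :
    monomial m (1 : K) ∈ coverIdeal K G ^ s ↔ MultiColorable G (fun i => s - m i) s := by
  simp [mem_coverIdeal_pow_iff]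

lemma mem_associatedPrimes_quotient_iff {A : Type*} [CommRing A] [IsNoetherianRing A]
    {I P : Ideal A} :
    P ∈ associatedPrimes A (A ⧸ I) ↔ P.IsPrime ∧ ∃ f, ∀ g, g ∈ P ↔ g * f ∈ I := by
  rw [AssociatedPrimes.mem_iff, isAssociatedPrime_iff, Ideal.Quotient.mk_surjective.exists]
  simp only [SetLike.ext_iff, Submodule.mem_colon_singleton, Submodule.mem_bot]
  refine and_congr_right fun _ => exists_congr fun f => forall_congr' fun g => ?_
  rw [← Ideal.Quotient.eq_zero_iff_mem (I := I), map_mul]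
  rfl

lemma mem_associatedPrimes_coverIdeal_pow_iff {s : ℕ} {P : Ideal (MvPolynomial (Fin n) K)} :
    P ∈ associatedPrimes (MvPolynomial (Fin n) K)
        (MvPolynomial (Fin n) K ⧸ (coverIdeal K G ^ s)) ↔
      P.IsPrime ∧ ∃ a, ∀ g, g ∈ P ↔ g * monomial a 1 ∈ coverIdeal K G ^ s := by
  rw [mem_associatedPrimes_quotient_iff]
  refine and_congr_right fun hP => ⟨exists_monomial_of_eq_colon fun f => ?_,
    fun ⟨a, ha⟩ => ⟨_, ha⟩⟩
  simp only [monomial_mem_coverIdeal_pow_iff]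
  exact mem_coverIdeal_pow_iff

lemma mul_monomial_mem_coverIdeal_pow_iff {s : ℕ} {a : Fin n →₀ ℕ}
    {g : MvPolynomial (Fin n) K} :
    g * monomial a 1 ∈ coverIdeal K G ^ s ↔
      ∀ β ∈ g.support, MultiColorable G (fun i => s - (β + a) i) s := by
  rw [mem_coverIdeal_pow_iff]
  constructor
  · refine fun h β hβ => h _ ?_
    rw [mem_support_iff, coeff_mul_monomial, mul_one]
    exact mem_support_iff.1 hβ
  · intro h γ hγ
    obtain ⟨β, hβ, a', ha', rfl⟩ := Finset.mem_add.1 (support_mul _ _ hγ)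
    rw [Finset.mem_singleton.1 (support_monomial_subset ha')]
    exact h β hβ

/-- The associated primes of powers of a cover ideal are monomial primes. -/
lemma exists_eq_varPrime {s : ℕ} {P : Ideal (MvPolynomial (Fin n) K)}
    (hP : P ∈ associatedPrimes (MvPolynomial (Fin n) K)
      (MvPolynomial (Fin n) K ⧸ (coverIdeal K G ^ s))) :
    ∃ R, P = varPrime K R := by
  classical
  obtain ⟨hprime, a, ha⟩ := mem_associatedPrimes_coverIdeal_pow_iff.1 hP
  refine ⟨Finset.univ.filter fun i => X i ∈ P, le_antisymm (fun g hg => ?_)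
    (varPrime_le_iff.2 fun i hi => (Finset.mem_filter.1 hi).2)⟩
  refine mem_varPrime_iff.2 fun β hβ => ?_
  have h1 : monomial β (1 : K) ∈ P := by
    rw [ha, mul_monomial_mem_coverIdeal_pow_iff] at hg ⊢
    intro γ hγ
    rw [Finset.mem_singleton.1 (support_monomial_subset hγ)]
    exact hg β hβ
  rw [monomial_eq, C_1, one_mul, Finsupp.prod, hprime.prod_mem_iff] at h1
  obtain ⟨i, hi, hiP⟩ := h1
  exact ⟨i, by simpa using hprime.mem_of_pow_mem _ hiP, Finsupp.mem_support_iff.1 hi⟩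

theorem varPrime_mem_associatedPrimes_iff {s : ℕ} {R : Finset (Fin n)} :
    varPrime K R ∈ associatedPrimes (MvPolynomial (Fin n) K)
        (MvPolynomial (Fin n) K ⧸ (coverIdeal K G ^ s)) ↔
      ∃ b, IsCriticalWeight G s R b := by
  rw [mem_associatedPrimes_coverIdeal_pow_iff, and_iff_right (isPrime_varPrime R)]
  simp only [mul_monomial_mem_coverIdeal_pow_iff, mem_varPrime_iff]
  constructor
  · rintro ⟨a, ha⟩
    have ha' : ∀ β : Fin n →₀ ℕ, (∃ i ∈ R, β i ≠ 0) ↔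
        MultiColorable G (fun i => s - (β + a) i) s := fun β => by
      simpa [support_monomial] using ha (monomial β 1)
    refine ⟨fun i => if i ∈ R then s - a i else 0, fun i => ?_, fun i => ?_, fun h => ?_,
      fun i hi => ?_⟩
    · dsimp only
      split_ifs <;> omega
    · simp +contextual
    · obtain ⟨i, hi, h0⟩ := (ha' (Finsupp.equivFunOnFinite.symm fun i => if i ∈ R then 0 else s)).2
        (h.mono (fun i => by by_cases hi : i ∈ R <;> simp [hi]) le_rfl)
      simp [hi] at h0
    · refine ((ha' (Finsupp.single i 1)).1 ⟨i, hi, by simp⟩).mono (fun j => ?_) le_rfl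
      by_cases hji : j = i
      · subst hji
        simp [hi]
        omega
      · by_cases hj : j ∈ R <;> simp [hj, hji]
  · rintro ⟨b, hbs, hbR, hnot, hcrit⟩
    refine ⟨Finsupp.equivFunOnFinite.symm fun i => s - b i, fun g => forall₂_congr fun β _ =>
      ⟨?_, fun h => ?_⟩⟩
    · rintro ⟨i, hi, hβi⟩
      refine (hcrit i hi).mono (fun j => ?_) le_rfl
      have := hbs j
      by_cases hji : j = i
      · subst hji
        simp
        omega
      · simp [hji]
        omega
    · by_contra! hcon
      refine hnot (h.mono (fun j => ?_) le_rfl)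
      have := hbs j
      by_cases hj : j ∈ R
      · simp [hcon j hj]
        omega
      · simp [by_contra fun h => hj (hbR j h)]

lemma coverIdeal_pow_le_varPrime {s : ℕ} (hs : 1 ≤ s) {e : Finset (Fin n)} (he : e ∈ G.edges) :
    coverIdeal K G ^ s ≤ varPrime K e := by
  refine (Ideal.pow_le_self (by omega)).trans (Ideal.span_le.2 ?_)
  rintro _ ⟨w, hw, rfl⟩
  obtain ⟨i, hi⟩ := hw e he
  rw [Finset.mem_inter] at hi
  exact Ideal.mem_of_dvd _ (Finset.dvd_prod_of_mem _ hi.1) (X_mem_varPrime_iff.2 hi.2)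

end CoverIdeal

/-- For a finite simple graph `G` with cover ideal `J = J(G)`, the
following are equivalent: (1) `G` is perfect; (2) for all `1 ≤ s < χ(G)`, a monomial
prime `P = (x_i : i ∈ R)` is associated to `S/J^s` iff the induced subgraph on `R` is a
clique of size `1 < |R| ≤ s + 1`; (3) for all `s ≥ 1`, `J^s` has the saturated chain
property for associated primes. -/
theorem perfect_tfae {n : ℕ} (K : Type*) [Field K] (G : GraphOn n) :
    [ IsPerfect G,
      ∀ s : ℕ, 1 ≤ s → s < chromOn G Finset.univ →
        ∀ R : Finset (Fin n),
          (varPrime K R ∈ associatedPrimes (MvPolynomial (Fin n) K)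
              (MvPolynomial (Fin n) K ⧸ (coverIdeal K G ^ s)) ↔
            (1 < R.card ∧ R.card ≤ s + 1 ∧ IsClique G R)),
      ∀ s : ℕ, 1 ≤ s → SaturatedChainProperty (coverIdeal K G ^ s) ].TFAE := by
  tfae_have 1 → 2 := fun h s _ _ R => by
    rw [varPrime_mem_associatedPrimes_iff, exists_isCriticalWeight_iff fun W _ => h W]
  tfae_have 1 → 3 := by
    intro h s hs P hP hPmin
    have hass : ∀ R, varPrime K R ∈ associatedPrimes (MvPolynomial (Fin n) K)
        (MvPolynomial (Fin n) K ⧸ (coverIdeal K G ^ s)) ↔ _ := fun R =>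
      varPrime_mem_associatedPrimes_iff.trans (exists_isCriticalWeight_iff fun W _ => h W)
    obtain ⟨R, rfl⟩ := exists_eq_varPrime hP
    obtain ⟨h1, h2, hR⟩ := (hass R).1 hP
    rcases (Nat.succ_le_of_lt h1).eq_or_lt with hcard | hcard
    · refine absurd ?_ hPmin
      obtain ⟨u, v, huv, rfl⟩ := Finset.card_eq_two.1 hcard.symm
      have hedge := hR u (by simp) v (by simp) huv
      obtain ⟨Q, hQ, hQP⟩ := Ideal.exists_minimalPrimes_le
        (coverIdeal_pow_le_varPrime (K := K) hs hedge)
      have hQass : Q ∈ associatedPrimes (MvPolynomial (Fin n) K)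
          (MvPolynomial (Fin n) K ⧸ (coverIdeal K G ^ s)) := by
        refine Module.associatedPrimes.minimalPrimes_annihilator_subset_associatedPrimes _ _ ?_
        rwa [Ideal.annihilator_quotient]
      obtain ⟨R', rfl⟩ := exists_eq_varPrime hQass
      rwa [Finset.eq_of_subset_of_card_le (varPrime_le_varPrime_iff.1 hQP)
        (by rw [← hcard]; exact ((hass R').1 hQass).1)] at hQ
    · obtain ⟨v, hv⟩ := Finset.card_pos.1 (zero_lt_one.trans h1)
      have hc := Finset.card_erase_add_one hv
      refine ⟨varPrime K (R.erase v), (hass _).2 ⟨by omega, by omega, fun a ha b hb =>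
        hR a (Finset.mem_of_mem_erase ha) b (Finset.mem_of_mem_erase hb)⟩,
        varPrime_lt_varPrime_iff.2 (Finset.erase_ssubset hv), ?_⟩
      rw [primeHeight_varPrime, primeHeight_varPrime, ← hc]
      norm_cast
  tfae_have 2 → 1 := by
    intro h
    by_contra hperf
    obtain ⟨W, s, hχ, hs, -, hW, -, hcrit⟩ := exists_isCriticalWeight_of_not_isPerfect hperf
    have hlt : s < chromOn G Finset.univ :=
      (hχ.symm ▸ Nat.lt_succ_self s : s < chromOn G W).trans_le
        (chromOn_mono (Finset.subset_univ W))
    exact hW ((h s hs hlt W).1 (varPrime_mem_associatedPrimes_iff.2 hcrit)).2.2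
  tfae_have 3 → 1 := by
    intro h
    by_contra hperf
    obtain ⟨W, s, hχ, hs, hω, hW, hmin, hcrit⟩ := exists_isCriticalWeight_of_not_isPerfect hperf
    obtain ⟨Q, hQ, hQW, hheight⟩ := h s hs _ (varPrime_mem_associatedPrimes_iff.2 hcrit) (by
      intro hWmin
      obtain ⟨e, he, heW⟩ : ∃ e ∈ G.edges, e ⊆ W := by
        by_contra! hind
        have : chromOn G W ≤ 1 := chromOn_le_iff.2
          ⟨{W}, by simp, by simpa [IsIndep] using hind, fun i => by
            rw [← Multiset.cons_zero, Multiset.countP_cons]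
            simp [indicatorWeight]⟩
        omega
      have hWe := varPrime_le_varPrime_iff.1 (hWmin.2
        ⟨isPrime_varPrime e, coverIdeal_pow_le_varPrime hs he⟩ (varPrime_le_varPrime_iff.2 heW))
      obtain rfl := hWe.antisymm heW
      obtain ⟨u, v, huv, rfl⟩ := Finset.card_eq_two.1 (G.card_eq _ he)
      refine hW fun a ha b hb hab => ?_
      rwa [Finset.eq_of_subset_of_card_le
        (Finset.insert_subset ha (Finset.singleton_subset_iff.2 hb))
        (by rw [Finset.card_pair huv, Finset.card_pair hab])])
    obtain ⟨W', rfl⟩ := exists_eq_varPrime hQ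
    have hss := varPrime_lt_varPrime_iff.1 hQW
    have hclique := ((exists_isCriticalWeight_iff fun V hV => hmin V (hV.trans_ssubset hss)).1
      (varPrime_mem_associatedPrimes_iff.1 hQ)).2.2
    rw [primeHeight_varPrime, primeHeight_varPrime] at hheight
    norm_cast at hheight
    have h1 := card_le_cliqueNumOn hss.subset hclique
    have h2 := chromOn_lt_card hW
    omega
  tfae_finish
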